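/- (L^{6/5} bound for the nonlinearity under local mass smallness) Let 0 < b < 1. There is a constant C = C(b) > 0 such that for every Schwartz function f : ℝ³ → ℂ, every R ≥ 1 and every ε > 0 satisfying ∫_{|x| ≤ 2R} |f(x)|² dx ≤ ε², one has ( ∫_{ℝ³} ( |f(x)|³ / |x|^b )^{6/5} dx )^{5/6} ≤ C ( ε^{1−b} ‖f‖_{H¹(ℝ³)}^{2+b} + R^{−b} ‖f‖_{H¹(ℝ³)}³ ). -/

import Mathlib

open MeasureTheory Real Filter
open scoped BigOperators Topology

noncomputable section

/-- Three-dimensional Euclidean space. -/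
abbrev E3 : Type := EuclideanSpace ℝ (Fin 3)

/-- The `j`-th standard basis vector of `E3`. -/
def e3 (j : Fin 3) : E3 := EuclideanSpace.single j 1

/-- The `j`-th spatial partial derivative of a complex-valued function. -/
def pd (j : Fin 3) (f : E3 → ℂ) (x : E3) : ℂ := fderiv ℝ f x (e3 j)

/-- The `j`-th spatial partial derivative of a real-valued function. -/
def pdR (j : Fin 3) (w : E3 → ℝ) (x : E3) : ℝ := fderiv ℝ w x (e3 j)

/-- The Laplacian of a complex-valued function on `E3`. -/
def lap (f : E3 → ℂ) (x : E3) : ℂ := ∑ j : Fin 3, pd j (fun y => pd j f y) x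

/-- The Laplacian of a real-valued function on `E3`. -/
def lapR (w : E3 → ℝ) (x : E3) : ℝ := ∑ j : Fin 3, pdR j (fun y => pdR j w y) x

/-- Second partial derivatives `∂_j ∂_k w` of a real-valued function on `E3`. -/
def pdR2 (j k : Fin 3) (w : E3 → ℝ) (x : E3) : ℝ := pdR j (fun y => pdR k w y) x

/-- A smooth Schwartz solution of the inhomogeneous cubic NLS with inverse-square
potential: `i ∂ₜ u + Δu − (a/|x|²) u = λ |x|^{−b} |u|² u` on `ℝ × (ℝ³ \ {0})`,
with `u(t,·)` Schwartz for each time, and Schwartz seminorms of `u(t,·)`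
and `∂ₜ u(t,·)` locally uniformly bounded in `t`. -/
structure IsSchwartzSolution (a b lam : ℝ) (u : ℝ → E3 → ℂ) : Prop where
  smooth : ContDiff ℝ (⊤ : ℕ∞) (Function.uncurry u)
  schwartz : ∀ t : ℝ, ∃ f : SchwartzMap E3 ℂ, ∀ x : E3, f x = u t x
  schwartz_dt : ∀ t : ℝ, ∃ f : SchwartzMap E3 ℂ, ∀ x : E3,
      f x = deriv (fun s => u s x) t
  unif_bound : ∀ (k n : ℕ) (T : ℝ), 0 < T → ∃ C : ℝ, ∀ t ∈ Set.Icc (-T) T, ∀ x : E3,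
      ‖x‖ ^ k * ‖iteratedFDeriv ℝ n (u t) x‖
        + ‖x‖ ^ k * ‖iteratedFDeriv ℝ n (fun y => deriv (fun s => u s y) t) x‖ ≤ C
  eqn : ∀ (t : ℝ) (x : E3), x ≠ 0 →
      Complex.I * deriv (fun s => u s x) t + lap (u t) x
          - ((a / ‖x‖ ^ 2 : ℝ) : ℂ) * u t x
        = (lam : ℂ) * ((‖x‖ ^ (-b) : ℝ) : ℂ) * ((‖u t x‖ ^ 2 : ℝ) : ℂ) * u t x

/-!
Split `ℝ³` into `|x| < r`, `r ≤ |x| ≤ R` and `|x| > R`. On the inner ball, Hölder with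
`5/6 = 1/3 + 1/2` and the scaling `‖|x|^{-b}‖_{L³(|x| < r)} ~ r^{1-b}` give `r^{1-b} ‖f‖₆³`. On the
other two pieces the weight is at most `r^{-b}`, respectively `R^{-b}`, and Hölder with
`5/6 = 1/2 + 1/3` gives `‖f‖₂ ‖f‖₆²`, where `‖f‖₂ ≤ ε` on `|x| ≤ R`. By the Sobolev inequality
`‖f‖₆ ≲ ‖∇f‖₂` everything is controlled by `H = ‖f‖_{H¹}`, and `r = ε / H` balances the first two
contributions `r^{1-b} H³` and `r^{-b} ε H²`.
-/

open Metric Module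
open scoped ENNReal NNReal

section LpEstimates

variable {α F : Type*} [MeasurableSpace α] {μ : Measure α} [NormedAddCommGroup F]

lemma eLpNorm_two_le_ofReal_rpow_integral {g : α → F} {h : α → ℝ} (hg : MemLp g 2 μ)
    (hh : Integrable h μ) (hgh : ∀ x, ‖g x‖ ^ 2 ≤ h x) :
    eLpNorm g 2 μ ≤ ENNReal.ofReal ((∫ x, h x ∂μ) ^ ((1 : ℝ) / 2)) := by
  rw [hg.eLpNorm_eq_integral_rpow_norm two_ne_zero ENNReal.ofNat_ne_top]
  simp only [ENNReal.toReal_ofNat, Real.rpow_ofNat, one_div]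
  gcongr
  · exact hg.integrable_norm_pow two_ne_zero
  · exact hgh

lemma integral_rpow_rpow_le_of_eLpNorm_le {g : α → ℝ} {p : ℝ≥0∞} {B : ℝ} (hp : p ≠ 0)
    (hp' : p ≠ ∞) (hg : AEStronglyMeasurable g μ) (hg0 : ∀ x, 0 ≤ g x) (hB : 0 ≤ B)
    (h : eLpNorm g p μ ≤ ENNReal.ofReal B) :
    (∫ x, g x ^ p.toReal ∂μ) ^ p.toReal⁻¹ ≤ B := by
  have hmem : MemLp g p μ := ⟨hg, h.trans_lt ENNReal.ofReal_lt_top⟩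
  rw [hmem.eLpNorm_eq_integral_rpow_norm hp hp', ENNReal.ofReal_le_ofReal_iff hB] at h
  simpa only [Real.norm_of_nonneg (hg0 _)] using h

lemma eLpNorm_le_eLpNorm_restrict_add_eLpNorm_restrict_compl {g : α → F} {p : ℝ≥0∞} {s : Set α}
    (hg : AEStronglyMeasurable g μ) (hs : MeasurableSet s) (hp : 1 ≤ p) :
    eLpNorm g p μ ≤ eLpNorm g p (μ.restrict s) + eLpNorm g p (μ.restrict sᶜ) := by
  rw [← eLpNorm_indicator_eq_eLpNorm_restrict hs,
    ← eLpNorm_indicator_eq_eLpNorm_restrict hs.compl]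
  calc eLpNorm g p μ = eLpNorm (s.indicator g + sᶜ.indicator g) p μ := by
        rw [Set.indicator_self_add_compl]
    _ ≤ _ := eLpNorm_add_le (hg.indicator hs) (hg.indicator hs.compl) hp

lemma eLpNorm_norm_pow (g : α → F) (p : ℝ≥0∞) {n : ℕ} (hn : n ≠ 0) :
    eLpNorm (fun x => ‖g x‖ ^ n) p μ = eLpNorm g (p * n) μ ^ n := by
  simpa using eLpNorm_norm_rpow (p := p) (μ := μ) g
    (show (0 : ℝ) < n from mod_cast Nat.pos_of_ne_zero hn)

lemma eLpNorm_mul_le {g h : α → ℝ} {p q r : ℝ≥0∞} [ENNReal.HolderTriple p q r]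
    (hg : AEStronglyMeasurable g μ) (hh : AEStronglyMeasurable h μ) :
    eLpNorm (fun x => g x * h x) r μ ≤ eLpNorm g p μ * eLpNorm h q μ := by
  simpa using eLpNorm_le_eLpNorm_mul_eLpNorm'_of_norm hg hh (· * ·) 1 (by simp)

instance holderTriple_three_two : ENNReal.HolderTriple 3 2 (6 / 5) := by
  constructor
  rw [← ENNReal.toReal_eq_toReal_iff' (by simp) (by simp)]
  rw [ENNReal.toReal_add (by simp) (by simp)]
  norm_num

instance holderTriple_two_three : ENNReal.HolderTriple 2 3 (6 / 5) :=
  holderTriple_three_two.symm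

lemma eLpNorm_norm_pow_three_mul_le {f : α → F} {w : α → ℝ} (hf : AEStronglyMeasurable f μ)
    (hw : AEStronglyMeasurable w μ) :
    eLpNorm (fun x => ‖f x‖ ^ 3 * w x) (6 / 5) μ ≤ eLpNorm w 3 μ * eLpNorm f 6 μ ^ 3 := by
  have hcube : eLpNorm (fun x => ‖f x‖ ^ 3) 2 μ = eLpNorm f 6 μ ^ 3 := by
    rw [eLpNorm_norm_pow f 2 three_ne_zero]; norm_num
  calc eLpNorm (fun x => ‖f x‖ ^ 3 * w x) (6 / 5) μ
      ≤ eLpNorm (fun x => ‖f x‖ ^ 3) 2 μ * eLpNorm w 3 μ := eLpNorm_mul_le (hf.norm.pow 3) hw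
    _ = _ := by rw [hcube, mul_comm]

lemma eLpNorm_norm_pow_three_le {f : α → F} (hf : AEStronglyMeasurable f μ) :
    eLpNorm (fun x => ‖f x‖ ^ 3) (6 / 5) μ ≤ eLpNorm f 2 μ * eLpNorm f 6 μ ^ 2 := by
  have hsq : eLpNorm (fun x => ‖f x‖ ^ 2) 3 μ = eLpNorm f 6 μ ^ 2 := by
    rw [eLpNorm_norm_pow f 3 two_ne_zero]; norm_num
  calc eLpNorm (fun x => ‖f x‖ ^ 3) (6 / 5) μ
      = eLpNorm (fun x => ‖f x‖ * ‖f x‖ ^ 2) (6 / 5) μ := by simp only [← pow_succ']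
    _ ≤ eLpNorm (fun x => ‖f x‖) 2 μ * eLpNorm (fun x => ‖f x‖ ^ 2) 3 μ :=
        eLpNorm_mul_le hf.norm (hf.norm.pow 2)
    _ = _ := by rw [eLpNorm_norm, hsq]

end LpEstimates

section PowerWeight

lemma pow_sub_one_mul_rpow {n : ℕ} {s y : ℝ} (hn : 0 < n) (hy : 0 < y) :
    y ^ (n - 1) * y ^ s = y ^ ((n : ℝ) - 1 + s) := by
  rw [← Real.rpow_natCast, ← Real.rpow_add hy, Nat.cast_pred hn]

variable {E : Type*} [NormedAddCommGroup E] [NormedSpace ℝ E] [FiniteDimensional ℝ E]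
  [Nontrivial E] [MeasurableSpace E] [BorelSpace E] (μ : Measure E) [μ.IsAddHaarMeasure]

lemma integrableOn_ball_rpow_norm {s r : ℝ} (hs : -(finrank ℝ E : ℝ) < s) (hr : 0 ≤ r) :
    IntegrableOn (fun x : E => ‖x‖ ^ s) (ball 0 r) μ := by
  rw [integrableOn_fun_norm_addHaar μ (f := fun y => y ^ s)]
  refine IntegrableOn.congr_fun (f := fun y => y ^ (finrank ℝ E - 1 + s)) ?_
    (fun y hy => (pow_sub_one_mul_rpow finrank_pos hy.1).symm) measurableSet_Ioo
  rw [← intervalIntegrable_iff_integrableOn_Ioo_of_le hr]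
  exact intervalIntegral.intervalIntegrable_rpow' (by linarith)

lemma setIntegral_ball_rpow_norm {s r : ℝ} (hs : -(finrank ℝ E : ℝ) < s) (hr : 0 ≤ r) :
    ∫ x in ball (0 : E) r, ‖x‖ ^ s ∂μ
      = finrank ℝ E * μ.real (ball 0 1) / (finrank ℝ E + s) * r ^ (finrank ℝ E + s) := by
  have hradial : (ball (0 : E) r).indicator (fun x => ‖x‖ ^ s)
      = fun x => (Set.Iio r).indicator (fun y => y ^ s) ‖x‖ := by
    ext x; simp [Set.indicator]
  have hpolar : ∀ y ∈ Set.Ioi (0 : ℝ),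
      y ^ (finrank ℝ E - 1) • (Set.Iio r).indicator (fun y => y ^ s) y
        = (Set.Iio r).indicator (fun y => y ^ (finrank ℝ E - 1 + s)) y := by
    intro y hy
    by_cases hyr : y < r <;> simp [hyr, pow_sub_one_mul_rpow (finrank_pos (R := ℝ) (M := E)) hy]
  have hpow : ∫ y in Set.Ioo 0 r, y ^ (finrank ℝ E - 1 + s)
      = r ^ (finrank ℝ E + s) / (finrank ℝ E + s) := by
    rw [← integral_Ioc_eq_integral_Ioo, ← intervalIntegral.integral_of_le hr,
      integral_rpow (Or.inl (by linarith)), show finrank ℝ E - 1 + s + 1 = finrank ℝ E + s by ring,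
      Real.zero_rpow (by linarith), sub_zero]
  rw [← integral_indicator measurableSet_ball, hradial, integral_fun_norm_addHaar μ,
    setIntegral_congr_fun measurableSet_Ioi hpolar, setIntegral_indicator measurableSet_Iio,
    Set.Ioi_inter_Iio, hpow]
  simp only [nsmul_eq_mul, smul_eq_mul]
  ring

lemma eLpNorm_rpow_norm_restrict_ball {b r : ℝ} {p : ℝ≥0∞} (hp : p ≠ 0) (hp' : p ≠ ∞)
    (hb : p.toReal * b < finrank ℝ E) (hr : 0 ≤ r) :
    eLpNorm (fun x : E => ‖x‖ ^ (-b)) p (μ.restrict (ball 0 r))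
      = ENNReal.ofReal ((finrank ℝ E * μ.real (ball 0 1) / (finrank ℝ E - p.toReal * b))
          ^ p.toReal⁻¹ * r ^ (finrank ℝ E / p.toReal - b)) := by
  have hp0 : p.toReal ≠ 0 := ENNReal.toReal_ne_zero.2 ⟨hp, hp'⟩
  have hnorm : ∀ x : E, ‖‖x‖ ^ (-b)‖ ^ p.toReal = ‖x‖ ^ (-(p.toReal * b)) := fun x => by
    rw [Real.norm_of_nonneg (by positivity), ← Real.rpow_mul (norm_nonneg x)]
    ring_nf
  have hs : -(finrank ℝ E : ℝ) < -(p.toReal * b) := neg_lt_neg hb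
  have hmeas : Measurable fun x : E => ‖x‖ ^ (-b) := by fun_prop
  have hmem : MemLp (fun x : E => ‖x‖ ^ (-b)) p (μ.restrict (ball 0 r)) := by
    rw [← integrable_norm_rpow_iff hmeas.aestronglyMeasurable hp hp']
    simpa only [hnorm, IntegrableOn] using integrableOn_ball_rpow_norm μ hs hr
  have hcoef : 0 ≤ finrank ℝ E * μ.real (ball 0 1) / (finrank ℝ E - p.toReal * b) :=
    div_nonneg (by positivity) (sub_nonneg.2 hb.le)
  rw [hmem.eLpNorm_eq_integral_rpow_norm hp hp']
  simp only [hnorm]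
  rw [setIntegral_ball_rpow_norm μ hs hr, ← sub_eq_add_neg,
    Real.mul_rpow hcoef (by positivity), ← Real.rpow_mul hr]
  congr 3
  field_simp

end PowerWeight

section Sobolev

lemma tendsto_const_mul_add_ofReal_mul {ι : Type*} {l : Filter ι} {K A B : ℝ≥0∞} {c : ι → ℝ}
    (hc : Tendsto c l (𝓝 0)) (hK : K ≠ ∞) (hB : B ≠ ∞) :
    Tendsto (fun i => K * (A + ENNReal.ofReal (c i) * B)) l (𝓝 (K * A)) := by
  have hsmall : Tendsto (fun i => ENNReal.ofReal (c i) * B) l (𝓝 0) := by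
    simpa only [ENNReal.ofReal_zero, zero_mul] using
      ENNReal.Tendsto.mul_const (ENNReal.tendsto_ofReal hc) (Or.inr hB)
  simpa only [add_zero] using ENNReal.Tendsto.const_mul (hsmall.const_add A) (Or.inr hK)

variable {E F : Type*} [NormedAddCommGroup E] [NormedSpace ℝ E]

lemma norm_fderiv_comp_smul_smul_le [NormedAddCommGroup F] [NormedSpace ℝ F] {χ : E → ℝ}
    {f : E → F} {M c : ℝ} (hχ : Differentiable ℝ χ) (hf : Differentiable ℝ f)
    (hχ1 : ∀ x, ‖χ x‖ ≤ 1) (hM : ∀ x, ‖fderiv ℝ χ x‖ ≤ M) (hc : 0 ≤ c) (x : E) :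
    ‖fderiv ℝ (fun y => χ (c • y) • f y) x‖ ≤ ‖fderiv ℝ f x‖ + c * M * ‖f x‖ := by
  have hcut : DifferentiableAt ℝ (fun y => χ (c • y)) x :=
    hχ.comp (differentiable_id.const_smul c) x
  rw [fderiv_fun_smul hcut (hf x), show fderiv ℝ (fun y => χ (c • y)) x = _ from fderiv_comp_smul c]
  calc _ ≤ ‖χ (c • x)‖ * ‖fderiv ℝ f x‖ + c * ‖fderiv ℝ χ (c • x)‖ * ‖f x‖ := by
        refine (norm_add_le _ _).trans_eq ?_
        rw [norm_smul, ContinuousLinearMap.norm_smulRight_apply, norm_smul, Real.norm_of_nonneg hc]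
    _ ≤ 1 * ‖fderiv ℝ f x‖ + c * M * ‖f x‖ := by gcongr <;> simp only [hχ1, hM]
    _ = _ := by rw [one_mul]

lemma tendsto_comp_smul_smul [NormedAddCommGroup F] [NormedSpace ℝ F] {ι : Type*} {l : Filter ι}
    {χ : E → ℝ} {c : ι → ℝ} (hχ : ContinuousAt χ 0) (hχ0 : χ 0 = 1) (hc : Tendsto c l (𝓝 0))
    (x : E) (y : F) : Tendsto (fun i => χ (c i • x) • y) l (𝓝 y) := by
  have hcx : Tendsto (fun i => c i • x) l (𝓝 0) := by
    simpa only [zero_smul] using hc.smul_const x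
  simpa only [Function.comp_apply, hχ0, one_smul] using (hχ.tendsto.comp hcx).smul_const y

lemma eLpNorm_fderiv_comp_smul_smul_le [MeasurableSpace E] [OpensMeasurableSpace E]
    (μ : Measure E) [NormedAddCommGroup F] [NormedSpace ℝ F] {χ : E → ℝ} {f : E → F} {M c : ℝ}
    {p : ℝ≥0∞} (hχ : Differentiable ℝ χ) (hf : ContDiff ℝ 1 f)
    (hχ1 : ∀ x, ‖χ x‖ ≤ 1) (hM : ∀ x, ‖fderiv ℝ χ x‖ ≤ M) (hc : 0 ≤ c) (hp : 1 ≤ p) :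
    eLpNorm (fderiv ℝ fun y => χ (c • y) • f y) p μ
      ≤ eLpNorm (fderiv ℝ f) p μ + ENNReal.ofReal (c * M) * eLpNorm f p μ := by
  have hM0 : 0 ≤ M := (norm_nonneg _).trans (hM 0)
  calc eLpNorm (fderiv ℝ fun y => χ (c • y) • f y) p μ
      ≤ eLpNorm ((fun x => ‖fderiv ℝ f x‖) + (c * M) • fun x => ‖f x‖) p μ :=
        eLpNorm_mono_real <|
          norm_fderiv_comp_smul_smul_le hχ (hf.differentiable one_ne_zero) hχ1 hM hc
    _ ≤ eLpNorm (fun x => ‖fderiv ℝ f x‖) p μ + eLpNorm ((c * M) • fun x => ‖f x‖) p μ :=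
        eLpNorm_add_le (hf.continuous_fderiv one_ne_zero).norm.aestronglyMeasurable
          (hf.continuous.norm.aestronglyMeasurable.const_smul _) hp
    _ = _ := by
        rw [eLpNorm_const_smul, eLpNorm_norm, eLpNorm_norm,
          Real.enorm_of_nonneg (mul_nonneg hc hM0)]

variable [FiniteDimensional ℝ E] [MeasurableSpace E] [BorelSpace E] (μ : Measure E)
  [μ.IsAddHaarMeasure] [NormedAddCommGroup F] [InnerProductSpace ℝ F]

-- The cutoffs `χ (x / (n + 1))` add at most `M ‖f‖_p / (n + 1)` to `‖∇f‖_p`, so the inequality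
-- for compact supports passes to the limit by Fatou.
theorem eLpNorm_le_eLpNorm_fderiv_of_memLp {f : E → F} {p p' : ℝ≥0} (hf : ContDiff ℝ 1 f)
    (hfp : MemLp f p μ) (hp : 1 ≤ p) (hn : 0 < finrank ℝ E)
    (hp' : (p' : ℝ)⁻¹ = p⁻¹ - (finrank ℝ E : ℝ)⁻¹) :
    eLpNorm f p' μ ≤ eLpNormLESNormFDerivOfEqInnerConst μ p * eLpNorm (fderiv ℝ f) p μ := by
  let χ : ContDiffBump (0 : E) := ⟨1, 2, one_pos, one_lt_two⟩
  have hχ : ContDiff ℝ 1 χ := χ.contDiff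
  obtain ⟨M, hM⟩ : ∃ M, ∀ x, ‖fderiv ℝ χ x‖ ≤ M :=
    (χ.hasCompactSupport.fderiv (𝕜 := ℝ)).exists_bound_of_continuous
      (hχ.continuous_fderiv one_ne_zero)
  have hχ_le : ∀ x, ‖χ x‖ ≤ 1 := fun x => (Real.norm_of_nonneg χ.nonneg).trans_le χ.le_one
  let c : ℕ → ℝ := fun n => 1 / ((n : ℝ) + 1)
  have hc : ∀ n, 0 < c n := fun n => by positivity
  have hc_lim : Tendsto c atTop (𝓝 0) := tendsto_one_div_add_atTop_nhds_zero_nat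
  let u : ℕ → E → F := fun n x => χ (c n • x) • f x
  have hu : ∀ n, ContDiff ℝ 1 (u n) := fun n => (hχ.comp (contDiff_const_smul (c n))).smul hf
  have hu_supp : ∀ n, HasCompactSupport (u n) := fun n =>
    (χ.hasCompactSupport.comp_smul (hc n).ne').smul_right
  have hu_lim : ∀ x, Tendsto (fun n => u n x) atTop (𝓝 (f x)) := fun x =>
    tendsto_comp_smul_smul χ.continuous.continuousAt
      (χ.one_of_mem_closedBall (mem_closedBall_self χ.rIn_pos.le)) hc_lim x (f x)
  have hu_bound : ∀ n, eLpNorm (u n) p' μ ≤ eLpNormLESNormFDerivOfEqInnerConst μ p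
      * (eLpNorm (fderiv ℝ f) p μ + ENNReal.ofReal (c n * M) * eLpNorm f p μ) := fun n => by
    refine (eLpNorm_le_eLpNorm_fderiv_of_eq_inner μ (hu n) (hu_supp n) hp hn hp').trans ?_
    gcongr
    exact eLpNorm_fderiv_comp_smul_smul_le μ (hχ.differentiable one_ne_zero) hf hχ_le hM (hc n).le
      (mod_cast hp)
  have hbound_lim : Tendsto (fun n => eLpNormLESNormFDerivOfEqInnerConst μ p
      * (eLpNorm (fderiv ℝ f) p μ + ENNReal.ofReal (c n * M) * eLpNorm f p μ)) atTop
      (𝓝 (eLpNormLESNormFDerivOfEqInnerConst μ p * eLpNorm (fderiv ℝ f) p μ)) :=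
    tendsto_const_mul_add_ofReal_mul (by simpa only [zero_mul] using hc_lim.mul_const M)
      ENNReal.coe_ne_top hfp.eLpNorm_ne_top
  calc eLpNorm f p' μ ≤ liminf (fun n => eLpNorm (u n) p' μ) atTop :=
        Lp.eLpNorm_lim_le_liminf_eLpNorm (fun n => (hu n).continuous.aestronglyMeasurable) f
          (ae_of_all μ hu_lim)
    _ ≤ _ := (liminf_le_liminf (Eventually.of_forall hu_bound)).trans_eq hbound_lim.liminf_eq

end Sobolev

section WeightedCube

variable {E F : Type*} [NormedAddCommGroup E] [MeasurableSpace E]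
  [NormedAddCommGroup F] {μ : Measure E} {f : E → F} {b r R : ℝ}

lemma eLpNorm_norm_pow_three_mul_rpow_restrict_le {s : Set E} (hf : AEStronglyMeasurable f μ)
    (hs : MeasurableSet s) (hb : 0 ≤ b) (hr : 0 < r) (hsr : ∀ x ∈ s, r ≤ ‖x‖) :
    eLpNorm (fun x => ‖f x‖ ^ 3 * ‖x‖ ^ (-b)) (6 / 5) (μ.restrict s)
      ≤ ENNReal.ofReal (r ^ (-b)) * (eLpNorm f 2 (μ.restrict s) * eLpNorm f 6 μ ^ 2) := by
  have hpointwise : ∀ x ∈ s,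
      ‖‖f x‖ ^ 3 * ‖x‖ ^ (-b)‖ ≤ r ^ (-b) * ‖‖f x‖ ^ 3‖ := fun x hx => by
    rw [norm_mul, mul_comm, Real.norm_of_nonneg (by positivity : 0 ≤ ‖x‖ ^ (-b))]
    exact mul_le_mul_of_nonneg_right
      (Real.rpow_le_rpow_of_nonpos hr (hsr x hx) (neg_nonpos.2 hb)) (norm_nonneg _)
  refine (eLpNorm_le_mul_eLpNorm_of_ae_le_mul
    ((ae_restrict_mem hs).mono hpointwise) (6 / 5)).trans ?_
  gcongr
  refine (eLpNorm_norm_pow_three_le hf.restrict).trans ?_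
  gcongr
  exact Measure.restrict_le_self

variable [OpensMeasurableSpace E]

lemma aestronglyMeasurable_norm_pow_three_mul_rpow (hf : AEStronglyMeasurable f μ) :
    AEStronglyMeasurable (fun x => ‖f x‖ ^ 3 * ‖x‖ ^ (-b)) μ :=
  (hf.norm.pow 3).mul (Measurable.aestronglyMeasurable (by fun_prop))

lemma eLpNorm_norm_pow_three_mul_rpow_le (hf : AEStronglyMeasurable f μ) (hb : 0 ≤ b)
    (hr : 0 < r) (hR : 0 < R) :
    eLpNorm (fun x => ‖f x‖ ^ 3 * ‖x‖ ^ (-b)) (6 / 5) μ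
      ≤ eLpNorm (fun x => ‖x‖ ^ (-b)) 3 (μ.restrict (ball 0 r)) * eLpNorm f 6 μ ^ 3
        + (ENNReal.ofReal (r ^ (-b))
            * (eLpNorm f 2 (μ.restrict (closedBall 0 R)) * eLpNorm f 6 μ ^ 2)
          + ENNReal.ofReal (R ^ (-b)) * (eLpNorm f 2 μ * eLpNorm f 6 μ ^ 2)) := by
  have hg := aestronglyMeasurable_norm_pow_three_mul_rpow (b := b) hf
  have hone : (1 : ℝ≥0∞) ≤ 6 / 5 := by
    rw [ENNReal.le_div_iff_mul_le (by simp) (by simp)]; norm_num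
  refine (eLpNorm_le_eLpNorm_restrict_add_eLpNorm_restrict_compl hg
    (measurableSet_ball (x := 0) (ε := r)) hone).trans (add_le_add ?near ?away)
  case near =>
    refine (eLpNorm_norm_pow_three_mul_le hf.restrict
      (Measurable.aestronglyMeasurable (by fun_prop))).trans ?_
    gcongr
    exact Measure.restrict_le_self
  case away =>
    refine (eLpNorm_le_eLpNorm_restrict_add_eLpNorm_restrict_compl hg.restrict
      (measurableSet_closedBall (x := 0) (ε := R)) hone).trans (add_le_add ?annulus ?far)
    case annulus =>
      rw [Measure.restrict_restrict measurableSet_closedBall]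
      refine (eLpNorm_norm_pow_three_mul_rpow_restrict_le hf
        (measurableSet_closedBall.inter measurableSet_ball.compl) hb hr fun x hx => ?_).trans ?_
      · simpa using hx.2
      · gcongr
        exact Set.inter_subset_left
    case far =>
      refine (eLpNorm_mono_measure _ (Measure.restrict_mono_measure
        Measure.restrict_le_self _)).trans ?_
      refine (eLpNorm_norm_pow_three_mul_rpow_restrict_le hf measurableSet_closedBall.compl hb hR
        fun x hx => ?_).trans ?_
      · exact (by simpa using hx : R < ‖x‖).le
      · gcongr
        exact Measure.restrict_le_self

lemma eLpNorm_norm_pow_three_mul_rpow_le_ofReal {W S ε H : ℝ} (hf : AEStronglyMeasurable f μ)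
    (hb : 0 ≤ b) (hr : 0 < r) (hR : 0 < R) (hW : 0 ≤ W) (hS : 0 ≤ S) (hε : 0 ≤ ε) (hH : 0 ≤ H)
    (hw : eLpNorm (fun x => ‖x‖ ^ (-b)) 3 (μ.restrict (ball 0 r)) ≤ ENNReal.ofReal W)
    (h6 : eLpNorm f 6 μ ≤ ENNReal.ofReal S) (h2 : eLpNorm f 2 μ ≤ ENNReal.ofReal H)
    (hloc : eLpNorm f 2 (μ.restrict (closedBall 0 R)) ≤ ENNReal.ofReal ε) :
    eLpNorm (fun x => ‖f x‖ ^ 3 * ‖x‖ ^ (-b)) (6 / 5) μ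
      ≤ ENNReal.ofReal (W * S ^ 3 + (r ^ (-b) * (ε * S ^ 2) + R ^ (-b) * (H * S ^ 2))) := by
  refine (eLpNorm_norm_pow_three_mul_rpow_le hf hb hr hR).trans ?_
  repeat rw [ENNReal.ofReal_add (by positivity) (by positivity)]
  repeat rw [ENNReal.ofReal_mul (by positivity)]
  repeat rw [ENNReal.ofReal_pow hS]
  gcongr

end WeightedCube

section H1

variable {ι E F : Type*} [Fintype ι] [NormedAddCommGroup E] [InnerProductSpace ℝ E]
  [NormedAddCommGroup F] [NormedSpace ℝ F]

lemma sq_opNorm_le_sum_sq_norm_apply (v : OrthonormalBasis ι ℝ E) (L : E →L[ℝ] F) :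
    ‖L‖ ^ 2 ≤ ∑ j, ‖L (v j)‖ ^ 2 := by
  refine (Real.le_sqrt (norm_nonneg _) (by positivity)).1 ?_
  refine L.opNorm_le_bound (Real.sqrt_nonneg _) fun x => ?_
  calc ‖L x‖ = ‖∑ j, v.repr x j • L (v j)‖ := by
        conv_lhs => rw [← v.sum_repr x, map_sum]
        simp only [map_smul]
    _ ≤ ∑ j, ‖L (v j)‖ * ‖v.repr x j‖ := by
        simpa only [norm_smul, mul_comm] using
          norm_sum_le Finset.univ fun j => v.repr x j • L (v j)
    _ ≤ √(∑ j, ‖L (v j)‖ ^ 2) * √(∑ j, ‖v.repr x j‖ ^ 2) := Real.sum_mul_le_sqrt_mul_sqrt _ _ _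
    _ = √(∑ j, ‖L (v j)‖ ^ 2) * ‖x‖ := by
        rw [← EuclideanSpace.norm_eq, LinearIsometryEquiv.norm_map]

variable [MeasurableSpace E] (μ : Measure E) (v : OrthonormalBasis ι ℝ E) {f : E → F}

/-- The `H¹` norm of `f`, with the gradient measured through its components along the orthonormal
basis `v`. By the convention for the integral, it is `0` when the integrand is not integrable. -/
def h1Norm (f : E → F) : ℝ :=
  (∫ x, (‖f x‖ ^ 2 + ∑ j, ‖fderiv ℝ f x (v j)‖ ^ 2) ∂μ) ^ ((1 : ℝ) / 2)

lemma h1Norm_nonneg : 0 ≤ h1Norm μ v f :=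
  Real.rpow_nonneg (integral_nonneg fun _ => by positivity) _

variable {μ}

lemma integrable_sq_norm_add_sum_sq_norm_fderiv (hf : MemLp f 2 μ)
    (hf' : MemLp (fderiv ℝ f) 2 μ) :
    Integrable (fun x => ‖f x‖ ^ 2 + ∑ j, ‖fderiv ℝ f x (v j)‖ ^ 2) μ :=
  (hf.integrable_norm_pow two_ne_zero).add <| integrable_finsetSum _ fun j _ =>
    ((ContinuousLinearMap.apply ℝ F (v j)).comp_memLp' hf').integrable_norm_pow two_ne_zero

lemma eLpNorm_le_h1Norm (hf : MemLp f 2 μ) (hf' : MemLp (fderiv ℝ f) 2 μ) :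
    eLpNorm f 2 μ ≤ ENNReal.ofReal (h1Norm μ v f) :=
  eLpNorm_two_le_ofReal_rpow_integral hf (integrable_sq_norm_add_sum_sq_norm_fderiv v hf hf')
    fun _ => le_add_of_nonneg_right (by positivity)

lemma eLpNorm_fderiv_le_h1Norm (hf : MemLp f 2 μ) (hf' : MemLp (fderiv ℝ f) 2 μ) :
    eLpNorm (fderiv ℝ f) 2 μ ≤ ENNReal.ofReal (h1Norm μ v f) :=
  eLpNorm_two_le_ofReal_rpow_integral hf' (integrable_sq_norm_add_sum_sq_norm_fderiv v hf hf')
    fun x => (sq_opNorm_le_sum_sq_norm_apply v _).trans (le_add_of_nonneg_left (by positivity))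

end H1

section ThreeDim

variable {E F : Type*} [NormedAddCommGroup E] [MeasurableSpace E] [BorelSpace E]
  [NormedAddCommGroup F] [InnerProductSpace ℝ F]

lemma eLpNorm_six_le_eLpNorm_fderiv_two [NormedSpace ℝ E] [FiniteDimensional ℝ E] (μ : Measure E)
    [μ.IsAddHaarMeasure] (hE : finrank ℝ E = 3) {f : E → F} (hf : ContDiff ℝ 1 f)
    (hf2 : MemLp f 2 μ) :
    eLpNorm f 6 μ ≤ eLpNormLESNormFDerivOfEqInnerConst μ 2 * eLpNorm (fderiv ℝ f) 2 μ := by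
  simpa using eLpNorm_le_eLpNorm_fderiv_of_memLp μ (p := 2) (p' := 6) hf (by simpa using hf2)
    one_le_two (by omega) (by rw [hE]; norm_num)

lemma balanced_radius_identity {A K ε H b : ℝ} (hε : 0 < ε) (hH : 0 < H) :
    A * (ε / H) ^ (1 - b) * (K * H) ^ 3 + (ε / H) ^ (-b) * (ε * (K * H) ^ 2)
      = (A * K ^ 3 + K ^ 2) * (ε ^ (1 - b) * H ^ (2 + b)) := by
  have hinner : (ε / H) ^ (1 - b) * H ^ 3 = ε ^ (1 - b) * H ^ (2 + b) := by
    rw [Real.div_rpow hε.le hH.le, div_mul_eq_mul_div, mul_div_assoc, ← Real.rpow_natCast,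
      ← Real.rpow_sub hH]
    congr 2
    push_cast
    ring
  have houter : (ε / H) ^ (-b) * (ε * H ^ 2) = ε ^ (1 - b) * H ^ (2 + b) := by
    rw [← hinner, sub_eq_neg_add, Real.rpow_add_one (by positivity)]
    field_simp
  linear_combination A * K ^ 3 * hinner + K ^ 2 * houter

theorem exists_eLpNorm_norm_pow_three_mul_rpow_le [NormedSpace ℝ E] [FiniteDimensional ℝ E]
    (μ : Measure E) [μ.IsAddHaarMeasure] (hE : finrank ℝ E = 3) {b : ℝ} (hb0 : 0 ≤ b)
    (hb1 : b < 1) :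
    ∃ C : ℝ, 0 < C ∧ ∀ f : E → F, ContDiff ℝ 1 f → ∀ H ε R : ℝ, 0 ≤ H → 0 < ε → 0 < R →
      eLpNorm f 2 μ ≤ ENNReal.ofReal H → eLpNorm (fderiv ℝ f) 2 μ ≤ ENNReal.ofReal H →
      eLpNorm f 2 (μ.restrict (closedBall 0 R)) ≤ ENNReal.ofReal ε →
      eLpNorm (fun x => ‖f x‖ ^ 3 * ‖x‖ ^ (-b)) (6 / 5) μ
        ≤ ENNReal.ofReal (C * (ε ^ (1 - b) * H ^ (2 + b) + R ^ (-b) * H ^ 3)) := by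
  have : Nontrivial E := nontrivial_of_finrank_pos (R := ℝ) (by omega)
  set A : ℝ := (3 * μ.real (ball 0 1) / (3 - 3 * b)) ^ (3 : ℝ)⁻¹ with hA
  set K : ℝ≥0 := eLpNormLESNormFDerivOfEqInnerConst μ 2
  have hA0 : 0 ≤ A := Real.rpow_nonneg (div_nonneg (by positivity) (by linarith)) _
  have hweight : ∀ r : ℝ, 0 ≤ r → eLpNorm (fun x : E => ‖x‖ ^ (-b)) 3 (μ.restrict (ball 0 r))
      ≤ ENNReal.ofReal (A * r ^ (1 - b)) := fun r hr => by
    rw [eLpNorm_rpow_norm_restrict_ball μ three_ne_zero ENNReal.ofNat_ne_top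
      (by rw [hE, ENNReal.toReal_ofNat]; push_cast; linarith) hr]
    simp [hE, hA]
  refine ⟨A * K ^ 3 + K ^ 2 + 1, by positivity, fun f hf H ε R hH hε hR h2 h2' hloc => ?_⟩
  have hmeas : AEStronglyMeasurable f μ := hf.continuous.aestronglyMeasurable
  have h6 : eLpNorm f 6 μ ≤ ENNReal.ofReal (K * H) := by
    rw [ENNReal.ofReal_mul K.coe_nonneg, ENNReal.ofReal_coe_nnreal]
    exact (eLpNorm_six_le_eLpNorm_fderiv_two μ hE hf
      ⟨hmeas, h2.trans_lt ENNReal.ofReal_lt_top⟩).trans (by gcongr)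
  have hradius : ∀ r : ℝ, 0 < r → eLpNorm (fun x => ‖f x‖ ^ 3 * ‖x‖ ^ (-b)) (6 / 5) μ
      ≤ ENNReal.ofReal (A * r ^ (1 - b) * (K * H) ^ 3
        + (r ^ (-b) * (ε * (K * H) ^ 2) + R ^ (-b) * (H * (K * H) ^ 2))) := fun r hr =>
    eLpNorm_norm_pow_three_mul_rpow_le_ofReal hmeas hb0 hr hR (by positivity) (by positivity)
      hε.le hH (hweight r hr.le) h6 h2 hloc
  rcases hH.eq_or_lt with rfl | hHpos
  · refine (hradius 1 one_pos).trans (ENNReal.ofReal_le_ofReal ?_)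
    simp only [one_rpow, mul_one, mul_zero, ne_eq, OfNat.ofNat_ne_zero, not_false_eq_true,
      zero_pow, add_zero]
    positivity
  · refine (hradius (ε / H) (by positivity)).trans (ENNReal.ofReal_le_ofReal ?_)
    rw [← add_assoc, balanced_radius_identity hε hHpos]
    have hinner : 0 ≤ ε ^ (1 - b) * H ^ (2 + b) := by positivity
    have houter : 0 ≤ (A * K ^ 3 + 1) * (R ^ (-b) * H ^ 3) := by positivity
    linarith

theorem L65_nonlinearity_bound_general [InnerProductSpace ℝ E] (v : OrthonormalBasis (Fin 3) ℝ E)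
    (μ : Measure E) [μ.IsAddHaarMeasure] {b : ℝ} (hb0 : 0 ≤ b) (hb1 : b < 1) :
    ∃ C : ℝ, 0 < C ∧ ∀ f : E → F, ContDiff ℝ 1 f → MemLp f 2 μ → MemLp (fderiv ℝ f) 2 μ →
      ∀ R : ℝ, 0 < R → ∀ ε : ℝ, 0 < ε → (∫ x in closedBall 0 R, ‖f x‖ ^ 2 ∂μ) ≤ ε ^ 2 →
      (∫ x, (‖f x‖ ^ 3 * ‖x‖ ^ (-b)) ^ ((6 : ℝ) / 5) ∂μ) ^ ((5 : ℝ) / 6)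
        ≤ C * (ε ^ (1 - b) * h1Norm μ v f ^ (2 + b) + R ^ (-b) * h1Norm μ v f ^ 3) := by
  have := v.toBasis.finiteDimensional_of_finite
  obtain ⟨C, hC, hbound⟩ := exists_eLpNorm_norm_pow_three_mul_rpow_le (F := F) μ
    (by simpa using finrank_eq_card_basis v.toBasis) hb0 hb1
  refine ⟨C, hC, fun f hf hf2 hf2' R hR ε hε hmass => ?_⟩
  have hH := h1Norm_nonneg μ v (f := f)
  have hlocal : eLpNorm f 2 (μ.restrict (closedBall 0 R)) ≤ ENNReal.ofReal ε := by
    refine (eLpNorm_two_le_ofReal_rpow_integral (hf2.restrict _)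
      ((hf2.restrict _).integrable_norm_pow two_ne_zero) fun _ => le_rfl).trans
      (ENNReal.ofReal_le_ofReal ?_)
    rw [← Real.sqrt_eq_rpow]
    exact Real.sqrt_le_iff.2 ⟨hε.le, hmass⟩
  have hnorm := integral_rpow_rpow_le_of_eLpNorm_le (p := 6 / 5) (by simp)
    (ENNReal.div_ne_top (by simp) (by simp))
    (aestronglyMeasurable_norm_pow_three_mul_rpow hf2.1) (fun x => by positivity) (by positivity)
    (hbound f hf (h1Norm μ v f) ε R hH hε hR (eLpNorm_le_h1Norm v hf2 hf2')
      (eLpNorm_fderiv_le_h1Norm v hf2 hf2') hlocal)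
  simpa using hnorm

end ThreeDim

lemma memLp_fderiv_schwartzMap {E F : Type*} [NormedAddCommGroup E] [NormedSpace ℝ E]
    [MeasurableSpace E] [OpensMeasurableSpace E] [SecondCountableTopology E]
    [NormedAddCommGroup F] [NormedSpace ℝ F] (f : SchwartzMap E F) (p : ℝ≥0∞)
    (μ : Measure E) [μ.HasTemperateGrowth] : MemLp (fderiv ℝ f) p μ :=
  ((SchwartzMap.fderivCLM ℝ E F f).memLp p μ).ae_eq
    (ae_of_all μ (SchwartzMap.fderivCLM_apply ℝ f))

lemma pd_eq_fderiv_basisFun (j : Fin 3) (f : E3 → ℂ) (x : E3) :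
    pd j f x = fderiv ℝ f x (EuclideanSpace.basisFun (Fin 3) ℝ j) := by
  rw [EuclideanSpace.basisFun_apply, pd, e3]

/-- **`L^{6/5}` bound for the nonlinearity under local mass smallness.** For
`0 < b < 1` there is `C = C(b) > 0` such that for every Schwartz `f`, every
`R ≥ 1` and `ε > 0` with `∫_{|x| ≤ 2R} |f|² ≤ ε²`,
`‖ |x|^{−b}|f|³ ‖_{L^{6/5}} ≤ C ( ε^{1−b} ‖f‖_{H¹}^{2+b} + R^{−b} ‖f‖_{H¹}³ )`. -/
theorem L65_nonlinearity_bound (b : ℝ) (hb0 : 0 < b) (hb1 : b < 1) :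
    ∃ C : ℝ, 0 < C ∧ ∀ f : SchwartzMap E3 ℂ, ∀ R : ℝ, 1 ≤ R → ∀ ε : ℝ, 0 < ε →
      (∫ x in Metric.closedBall (0 : E3) (2 * R), ‖f x‖ ^ 2) ≤ ε ^ 2 →
      (∫ x : E3, (‖f x‖ ^ 3 * ‖x‖ ^ (-b)) ^ ((6 : ℝ)/5)) ^ ((5 : ℝ)/6)
        ≤ C * (ε ^ (1 - b)
              * ((∫ x : E3, (‖f x‖ ^ 2 + ∑ j : Fin 3, ‖pd j (⇑f) x‖ ^ 2))
                  ^ ((1 : ℝ)/2)) ^ (2 + b)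
            + R ^ (-b)
              * ((∫ x : E3, (‖f x‖ ^ 2 + ∑ j : Fin 3, ‖pd j (⇑f) x‖ ^ 2))
                  ^ ((1 : ℝ)/2)) ^ (3 : ℕ)) := by
  simp only [pd_eq_fderiv_basisFun]
  obtain ⟨C, hC, hbound⟩ := L65_nonlinearity_bound_general (F := ℂ)
    (EuclideanSpace.basisFun (Fin 3) ℝ) volume hb0.le hb1
  refine ⟨C, hC, fun f R hR ε hε hmass => hbound f (f.smooth 1) (f.memLp 2)
    (memLp_fderiv_schwartzMap f 2 volume) R (by linarith) ε hε (le_trans ?_ hmass)⟩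
  exact setIntegral_mono_set ((f.memLp 2).integrable_norm_pow two_ne_zero).integrableOn
    (ae_of_all _ fun _ => by positivity)
    (closedBall_subset_closedBall (by linarith)).eventuallyLE
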